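/- arXiv:1505.02044 — 2 statements merged into one kernel-verified Lean document; each statement's English description precedes it below -/
import Mathlib

section
/- Suppose p_h ∈ X_h and c_h ∈ V_h satisfy ⟨p_h, v⟩ = 0 for all v ∈ V_h and ⟨p_h + c_h, q⟩ = ⟨φ, q⟩ for all q ∈ X_h. Then ‖p − p_h‖ + ‖c − c_h‖ ≤ 5·( inf_{q ∈ X_h} ‖p − q‖ + inf_{v ∈ V_h} ‖c − v‖ ). -/
/-! Testing the second equation with `v ∈ V_h` and using `p ⟂ V`, `p_h ⟂ V_h` shows
`c - c_h ⟂ V_h`, so `c_h` is the best approximation of `c` in `V_h`. Moreover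
`(p - p_h) + (c - c_h) ⟂ X_h`; testing this with `r = q - p_h`, `q ∈ X_h`, yields
`‖r‖ ≤ ‖p - q‖ + ‖c - c_h‖`, hence `‖p - p_h‖ ≤ 2 ‖p - q‖ + ‖c - c_h‖`. The sum of the
errors is thus bounded with constant `2`, better than the required `5`. -/

open RealInnerProductSpace

/-- Abstract Hilbert-space form of the best-approximation theorem (Theorem 3.5):
if `p_h ∈ X_h` and `c_h ∈ V_h` solve the discrete mixed problem, then the error
is bounded by `5` times the sum of the best-approximation errors. -/
theorem stmt0 {X : Type*} [NormedAddCommGroup X] [InnerProductSpace ℝ X]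
    [CompleteSpace X]
    (V : Submodule ℝ X) (hV : IsClosed (V : Set X))
    (X_h V_h : Submodule ℝ X) [FiniteDimensional ℝ X_h]
    (hVh : V_h ≤ V ⊓ X_h)
    (φ p c : X) (hp : p ∈ Vᗮ) (hc : c ∈ V) (hpc : p + c = φ)
    (p_h c_h : X) (hph : p_h ∈ X_h) (hch : c_h ∈ V_h)
    (horth : ∀ v ∈ V_h, ⟪p_h, v⟫ = 0)
    (heq : ∀ q ∈ X_h, ⟪p_h + c_h, q⟫ = ⟪φ, q⟫) :
    ‖p - p_h‖ + ‖c - c_h‖ ≤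
      5 * ((⨅ q : X_h, ‖p - (q : X)‖) + ⨅ v : V_h, ‖c - (v : X)‖) := by
  have hB : ∀ v ∈ V_h, ‖c - c_h‖ ≤ ‖c - v‖ := by
    intro v hv
    have hw : c_h - v ∈ V_h := V_h.sub_mem hch hv
    have h1 := heq _ (hVh hw).2
    have h2 := horth _ hw
    have h3 : ⟪p, c_h - v⟫ = 0 := V.inner_left_of_mem_orthogonal (hVh hw).1 hp
    have h4 : ⟪c - c_h, c_h - v⟫ = 0 := by
      rw [← hpc, inner_add_left, inner_add_left] at h1
      rw [inner_sub_left]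
      linarith
    have h5 := norm_add_sq_eq_norm_sq_add_norm_sq_of_inner_eq_zero _ _ h4
    rw [sub_add_sub_cancel] at h5
    nlinarith [norm_nonneg (c - c_h), norm_nonneg (c - v), mul_self_nonneg ‖c_h - v‖]
  have hA : ∀ q ∈ X_h, ‖p - p_h‖ ≤ 2 * ‖p - q‖ + ‖c - c_h‖ := by
    intro q hq
    have h1 := heq _ (X_h.sub_mem hq hph)
    have h2 : ‖q - p_h‖ * ‖q - p_h‖ = -⟪(p - q) + (c - c_h), q - p_h⟫ := by
      rw [← real_inner_self_eq_norm_mul_norm]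
      rw [← hpc] at h1
      simp only [inner_add_left, inner_sub_left] at h1 ⊢
      linarith
    have h3 := neg_le_of_abs_le (abs_real_inner_le_norm ((p - q) + (c - c_h)) (q - p_h))
    have h4 := norm_add_le (p - q) (c - c_h)
    have h5 : ‖q - p_h‖ ≤ ‖(p - q) + (c - c_h)‖ := by
      by_contra! h
      nlinarith [norm_nonneg ((p - q) + (c - c_h))]
    have h6 := norm_sub_le_norm_sub_add_norm_sub p q p_h
    linarith
  have hJ : ‖c - c_h‖ ≤ ⨅ v : V_h, ‖c - (v : X)‖ := le_ciInf fun v => hB v v.2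
  have hI : (‖p - p_h‖ - ‖c - c_h‖) / 2 ≤ ⨅ q : X_h, ‖p - (q : X)‖ :=
    le_ciInf fun q => by linarith [hA q q.2]
  have hI0 : 0 ≤ ⨅ q : X_h, ‖p - (q : X)‖ := Real.iInf_nonneg fun q => norm_nonneg _
  linarith [norm_nonneg (c - c_h)]
end

section
/- Let X, Y, U be real Hilbert spaces, let A : Y → X and B : U → Y be bounded linear maps with A ∘ B = 0 and B injective, and let φ ∈ X. Suppose (p, α, w) ∈ X × Y × U satisfies: ⟨p, q⟩ + ⟨q, A α⟩ = ⟨φ, q⟩ for all q ∈ X; ⟨p, A β⟩ + ⟨β, B w⟩ = 0 for all β ∈ Y; and ⟨α, B v⟩ = 0 for all v ∈ U. Then w = 0, p + A α = φ, and ⟨p, A β⟩ = 0 for all β ∈ Y. -/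
open RealInnerProductSpace

/-- Abstract Hilbert-space form of the claim in Section 7: in the regularized
three-field formulation the Lagrange multiplier vanishes (`w = 0`) and the
first two fields solve the original two-field problem. -/
theorem stmt13 {X Y U : Type*}
    [NormedAddCommGroup X] [InnerProductSpace ℝ X]
    [NormedAddCommGroup Y] [InnerProductSpace ℝ Y]
    [NormedAddCommGroup U] [InnerProductSpace ℝ U]
    (A : Y →L[ℝ] X) (B : U →L[ℝ] Y)
    (hAB : ∀ v : U, A (B v) = 0) (hB : Function.Injective B)
    (φ p : X) (α : Y) (w : U)
    (h1 : ∀ q : X, ⟪p, q⟫ + ⟪q, A α⟫ = ⟪φ, q⟫)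
    (h2 : ∀ β : Y, ⟪p, A β⟫ + ⟪β, B w⟫ = 0)
    (h3 : ∀ v : U, ⟪α, B v⟫ = 0) :
    w = 0 ∧ p + A α = φ ∧ ∀ β : Y, ⟪p, A β⟫ = 0 := by
  -- Testing `h2` with `β = B w` kills the first term, leaving `‖B w‖² = 0`.
  have hBw : B w = 0 := by simpa [hAB] using h2 (B w)
  refine ⟨hB (by rw [hBw, map_zero]), ext_inner_right ℝ fun q => ?_, fun β => ?_⟩
  · rw [inner_add_left, real_inner_comm q (A α), h1 q]
  · simpa [hBw] using h2 β
end
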